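/- arXiv:1704.04308 — 2 statements merged into one kernel-verified Lean document; each statement's English description precedes it below -/
import Mathlib

section
/- Let M be a minimal model of a bouquet of odd algebraic spheres and, for odd k, let M_k be the subalgebra generated by generators of degree ≤ k. Then H^{k+1}(M_k) = 0 and H^{k+2}(M_k) = 0. -/
/-!  Common setup: commutative differential graded algebras (CDGAs) over ℚ,
graded by ℕ, with graded commutativity and the graded Leibniz rule. -/

namespace PaperDGA

structure CDGA : Type 1 where
  carrier : Type
  [ring : Ring carrier]
  [alg : Algebra ℚ carrier]
  grade : ℕ → Submodule ℚ carrier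
  grade_sup : (⨆ i, grade i) = ⊤
  one_mem : (1 : carrier) ∈ grade 0
  mul_mem : ∀ {i j : ℕ} {x y : carrier}, x ∈ grade i → y ∈ grade j → x * y ∈ grade (i + j)
  gcomm : ∀ {i j : ℕ} {x y : carrier}, x ∈ grade i → y ∈ grade j →
      x * y = ((-1 : ℚ) ^ (i * j)) • (y * x)
  d : carrier →ₗ[ℚ] carrier
  d_grade : ∀ {i : ℕ} {x : carrier}, x ∈ grade i → d x ∈ grade (i + 1)
  d_sq : ∀ x, d (d x) = 0
  leibniz : ∀ {i : ℕ} {x : carrier}, x ∈ grade i → ∀ y,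
      d (x * y) = d x * y + ((-1 : ℚ) ^ i) • (x * d y)

attribute [instance] CDGA.ring CDGA.alg

/-- `z` is exact (a coboundary). -/
def CDGA.exactAt (B : CDGA) (z : B.carrier) : Prop := ∃ e, B.d e = z

/-- `B` is connected: its degree-zero part is ℚ·1. -/
def CDGA.connected (B : CDGA) : Prop := ∀ x ∈ B.grade 0, ∃ q : ℚ, x = q • (1 : B.carrier)

/-- Degree-`i` cocycles. -/
def CDGA.Z (B : CDGA) (i : ℕ) : Submodule ℚ B.carrier := B.grade i ⊓ LinearMap.ker B.d

/-- Degree-`i` cohomology, as a ℚ-vector space. -/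
abbrev CDGA.H (B : CDGA) (i : ℕ) :=
  (B.Z i) ⧸ ((B.grade i ⊓ LinearMap.range B.d).comap (B.Z i).subtype)

/-- Finite cohomological dimension: cohomology vanishes above some degree. -/
def CDGA.finCohomDim (C : CDGA) : Prop :=
  ∃ D : ℕ, ∀ j, D < j → ∀ z ∈ C.grade j, C.d z = 0 → C.exactAt z

/-- The submodule spanned by products of two positive-degree elements. -/
def CDGA.posSq (M : CDGA) : Submodule ℚ M.carrier :=
  Submodule.span ℚ {y | ∃ p q : ℕ, 0 < p ∧ 0 < q ∧
    ∃ a ∈ M.grade p, ∃ b ∈ M.grade q, y = a * b}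

/-- A morphism of graded algebras (differential not necessarily respected). -/
structure GAlgHom (B C : CDGA) where
  toFun : B.carrier →ₐ[ℚ] C.carrier
  map_grade : ∀ (i : ℕ), ∀ x ∈ B.grade i, toFun x ∈ C.grade i

/-- A morphism of CDGAs. -/
structure CDGAHom (B C : CDGA) extends GAlgHom B C where
  map_d : ∀ z, toFun (B.d z) = C.d (toFun z)

/-- `f` induces an isomorphism on cohomology in every degree (stated elementwise). -/
def QuasiIso {B C : CDGA} (f : CDGAHom B C) : Prop :=
  ∀ i : ℕ,
    (∀ x ∈ B.grade i, B.d x = 0 → C.exactAt (f.toFun x) → B.exactAt x) ∧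
    (∀ y ∈ C.grade i, C.d y = 0 →
      ∃ x ∈ B.grade i, B.d x = 0 ∧ C.exactAt (y - f.toFun x))

/-- Free generators of a free graded-commutative DGA `M`:
a graded space of generators, with the universal property of the free
graded-commutative algebra. -/
structure FreeGens (M : CDGA) where
  V : ℕ → Submodule ℚ M.carrier
  V_le : ∀ i, V i ≤ M.grade i
  V_pos : V 0 = ⊥
  free : ∀ (C : CDGA) (f : ∀ i : ℕ, ↥(V i) →ₗ[ℚ] C.carrier),
    (∀ (i : ℕ) (v : ↥(V i)), f i v ∈ C.grade i) →
    ∃! g : GAlgHom M C, ∀ (i : ℕ) (v : ↥(V i)), g.toFun ↑v = f i v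

/-- The subalgebra generated by the generators of degree ≤ k. -/
def gensBelow {M : CDGA} (F : FreeGens M) (k : ℕ) : Subalgebra ℚ M.carrier :=
  Algebra.adjoin ℚ {x | ∃ i ≤ k, x ∈ F.V i}

/-- A bouquet of odd algebraic spheres: zero differential, connected,
products of positive-degree elements vanish, no positive even degrees. -/
def IsBouquet (S : CDGA) : Prop :=
  (∀ z, S.d z = 0) ∧ S.connected ∧
  (∀ p q : ℕ, 0 < p → 0 < q → ∀ a ∈ S.grade p, ∀ b ∈ S.grade q, a * b = 0) ∧
  (∀ k : ℕ, 0 < k → S.grade (2 * k) = ⊥)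

/-- `L` is the free commutative DGA `Λ(η) = ℚ ⊕ ℚη` on one generator `η`
of (odd) degree `n`, with zero differential. -/
def IsExterior (L : CDGA) (n : ℕ) (η : L.carrier) : Prop :=
  (∀ z, L.d z = 0) ∧ L.connected ∧ η ∈ L.grade n ∧ η ≠ 0 ∧
  L.grade n = Submodule.span ℚ {η} ∧ (∀ m : ℕ, 0 < m → m ≠ n → L.grade m = ⊥)

/-- The data of an algebraic fibration (relative model algebra)
`(B, d) ↪ (T, d) = (B ⊗ ΛV, d)`, with its filtered space of generators `V n i`
(filtration stage `n`, degree `i`) and its algebraic fiber `ℚ ⊗_B (B ⊗ ΛV)`. -/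
structure FibData (B T : CDGA) (incl : CDGAHom B T) where
  V : ℕ → ℕ → Submodule ℚ T.carrier
  V_le_grade : ∀ n i, V n i ≤ T.grade i
  V_mono : ∀ n i, V n i ≤ V (n + 1) i
  dV0 : ∀ i, ∀ v ∈ V 0 i, ∃ b : B.carrier, T.d v = incl.toFun b
  dV : ∀ n i, ∀ v ∈ V (n + 1) i,
    T.d v ∈ Algebra.adjoin ℚ (Set.range incl.toFun ∪ {w | ∃ m, w ∈ V n m})
  gen : Algebra.adjoin ℚ (Set.range incl.toFun ∪ {w | ∃ n m, w ∈ V n m}) = ⊤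
  fiber : CDGA
  proj : CDGAHom T fiber
  proj_surj : Function.Surjective proj.toFun
  proj_incl : ∀ i : ℕ, 0 < i → ∀ b ∈ B.grade i, proj.toFun (incl.toFun b) = 0
  proj_ker : ∀ z : T.carrier, proj.toFun z = 0 ↔
    z ∈ Submodule.span ℚ {y | ∃ i : ℕ, 0 < i ∧ ∃ b ∈ B.grade i,
      ∃ t : T.carrier, y = incl.toFun b * t}

/-- The fibration has finite-dimensional generating space `V`. -/
def FibData.finite {B T : CDGA} {incl : CDGAHom B T} (fd : FibData B T incl) : Prop :=
  ∃ m : ℕ, (∀ n i, fd.V n i = fd.V m i) ∧ (∀ i, FiniteDimensional ℚ ↥(fd.V m i)) ∧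
    ∃ D : ℕ, ∀ i, D < i → fd.V m i = ⊥

/-- An odd algebraic spherical fibration `B ⊗ Λ(x)` with `deg x = 2k-1`, `dx = β`:
the total CDGA is free over `B` on one odd generator `x`. -/
structure OddSphericalFib (B : CDGA) (k : ℕ) (β : B.carrier) where
  total : CDGA
  incl : CDGAHom B total
  x : total.carrier
  x_grade : x ∈ total.grade (2 * k - 1)
  dx : total.d x = incl.toFun β
  decomp : ∀ z : total.carrier, ∃! p : B.carrier × B.carrier,
    z = incl.toFun p.1 + incl.toFun p.2 * x


theorem gensBelow_mono {M : CDGA} (F : FreeGens M) {i j : ℕ} (h : i ≤ j) :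
    gensBelow F i ≤ gensBelow F j := by
  apply Algebra.adjoin_mono
  rintro x ⟨l, hl, hx⟩
  exact ⟨l, hl.trans h, hx⟩

/-- Homogeneous elements of degree `i` lying in the subalgebra generated in degrees `≤ i`. -/
def lowGrade {M : CDGA} (F : FreeGens M) (i : ℕ) : Submodule ℚ M.carrier :=
  M.grade i ⊓ Subalgebra.toSubmodule (gensBelow F i)

instance lowGrade_graded {M : CDGA} (F : FreeGens M) :
    SetLike.GradedMonoid (lowGrade F) where
  one_mem := ⟨M.one_mem, (gensBelow F 0).one_mem⟩
  mul_mem := by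
    rintro i j x y ⟨hx, hx'⟩ ⟨hy, hy'⟩
    exact ⟨M.mul_mem hx hy, (gensBelow F (i + j)).mul_mem
      (gensBelow_mono F (Nat.le_add_right i j) hx')
      (gensBelow_mono F (Nat.le_add_left j i) hy')⟩

theorem lof_congr {M : CDGA} (F : FreeGens M) {i j : ℕ} (h : i = j)
    (a : lowGrade F i) (b : lowGrade F j) (hab : (a : M.carrier) = b) :
    DirectSum.of (fun i => lowGrade F i) i a = DirectSum.of (fun i => lowGrade F i) j b := by
  subst h
  congr 1
  exact Subtype.ext hab

/-- The external direct sum of the `lowGrade`s, with zero differential. -/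
noncomputable def lowCDGA {M : CDGA} (F : FreeGens M) : CDGA where
  carrier := DirectSum ℕ (fun i => lowGrade F i)
  ring := inferInstance
  alg := inferInstance
  grade i := LinearMap.range (DirectSum.lof ℚ ℕ (fun i => lowGrade F i) i)
  grade_sup := by
    rw [eq_top_iff]
    rintro x -
    induction x using DirectSum.induction_on with
    | zero => exact Submodule.zero_mem _
    | of i a => exact Submodule.mem_iSup_of_mem i ⟨a, rfl⟩
    | add x y hx hy => exact Submodule.add_mem _ hx hy
  one_mem := ⟨⟨1, M.one_mem, (gensBelow F 0).one_mem⟩, rfl⟩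
  mul_mem := by
    rintro i j _ _ ⟨a, rfl⟩ ⟨b, rfl⟩
    exact ⟨GradedMonoid.GMul.mul (A := fun i => lowGrade F i) a b,
      (DirectSum.of_mul_of (A := fun i => lowGrade F i) a b).symm⟩
  gcomm := by
    rintro i j _ _ ⟨a, rfl⟩ ⟨b, rfl⟩
    rw [DirectSum.lof_eq_of, DirectSum.lof_eq_of, DirectSum.of_mul_of, DirectSum.of_mul_of,
      ← DirectSum.lof_eq_of ℚ, ← DirectSum.lof_eq_of ℚ, ← map_smul,
      DirectSum.lof_eq_of, DirectSum.lof_eq_of]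
    exact lof_congr F (Nat.add_comm i j) _ _ (M.gcomm a.2.1 b.2.1)
  d := 0
  d_grade := fun _ => Submodule.zero_mem _
  d_sq := fun _ => rfl
  leibniz := by
    intros
    simp

theorem V_le_low {M : CDGA} (F : FreeGens M) (i : ℕ) : F.V i ≤ lowGrade F i :=
  fun x hx => ⟨F.V_le i hx, Algebra.subset_adjoin ⟨i, le_rfl, hx⟩⟩

theorem galg_ext {M C : CDGA} (F : FreeGens M) (g h : GAlgHom M C)
    (H : ∀ i, ∀ v ∈ F.V i, g.toFun v = h.toFun v) : g = h := by
  obtain ⟨e, -, he⟩ := F.free C (fun i => h.toFun.toLinearMap ∘ₗ (F.V i).subtype)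
    (fun i v => h.map_grade i _ (F.V_le i v.2))
  rw [he g (fun i v => H i v v.2), he h (fun i v => rfl)]

theorem exists_split {M : CDGA} (F : FreeGens M) :
    ∃ g : M.carrier →ₗ[ℚ] DirectSum ℕ (fun i => lowGrade F i),
      ∀ i, ∀ x ∈ M.grade i, ∃ h : x ∈ lowGrade F i,
        g x = DirectSum.lof ℚ ℕ (fun i => lowGrade F i) i ⟨x, h⟩ := by
  obtain ⟨g, hg, -⟩ := F.free (lowCDGA F)
    (fun i => DirectSum.lof ℚ ℕ (fun i => lowGrade F i) i ∘ₗ Submodule.inclusion (V_le_low F i))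
    (fun i v => ⟨_, rfl⟩)
  let c : GAlgHom (lowCDGA F) M :=
    { toFun := DirectSum.coeAlgHom (lowGrade F)
      map_grade := by
        rintro i _ ⟨a, rfl⟩
        have : DirectSum.coeAlgHom (lowGrade F)
          (DirectSum.lof ℚ ℕ (fun i => lowGrade F i) i a) = a :=
            DirectSum.coeAlgHom_of (lowGrade F) i a
        exact (congrArg (· ∈ M.grade i) this).mpr a.2.1 }
  let cg : GAlgHom M M :=
    { toFun := c.toFun.comp g.toFun
      map_grade := fun i x hx => c.map_grade i _ (g.map_grade i x hx) }
  let ident : GAlgHom M M := { toFun := AlgHom.id ℚ _, map_grade := fun _ _ h => h }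
  have key : cg = ident := by
    apply galg_ext F
    intro i v hv
    change c.toFun (g.toFun v) = v
    rw [hg i ⟨v, hv⟩]
    exact DirectSum.coeAlgHom_of (lowGrade F) i _
  refine ⟨g.toFun.toLinearMap, ?_⟩
  intro i x hx
  obtain ⟨a, ha⟩ := g.map_grade i x hx
  have h1 : c.toFun (g.toFun x) = x := by
    have := congrArg (fun q : GAlgHom M M => q.toFun x) key
    exact this
  rw [← ha] at h1
  have h2 : (a : M.carrier) = x := (DirectSum.coeAlgHom_of (lowGrade F) i a).symm.trans h1
  subst h2
  exact ⟨a.2, ha.symm⟩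

theorem exists_primitive {M : CDGA} (F : FreeGens M) (n : ℕ) (z : M.carrier)
    (hz : z ∈ M.grade (n + 1)) (hex : M.exactAt z) :
    ∃ e ∈ gensBelow F n, M.d e = z := by
  obtain ⟨g, hg⟩ := exists_split F
  obtain ⟨e, he⟩ := hex
  let P : ℕ → M.carrier →ₗ[ℚ] M.carrier := fun m =>
    (lowGrade F m).subtype ∘ₗ DirectSum.component ℚ ℕ (fun i => lowGrade F i) m ∘ₗ g
  have hP : ∀ m x, P m x = (DirectSum.component ℚ ℕ (fun i => lowGrade F i) m (g x) : M.carrier) :=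
    fun _ _ => rfl
  have hPs : ∀ m, ∀ x ∈ M.grade m, P m x = x := by
    intro m x hx
    obtain ⟨h, e1⟩ := hg m x hx
    rw [hP, e1, DirectSum.component.lof_self]
  have hPn : ∀ m i, i ≠ m → ∀ x ∈ M.grade i, P m x = 0 := by
    intro m i hi x hx
    obtain ⟨h, e1⟩ := hg i x hx
    rw [hP, e1, DirectSum.component.of, dif_neg hi]
    rfl
  have hcomm : ∀ x, P (n + 1) (M.d x) = M.d (P n x) := by
    intro x
    have hx : x ∈ ⨆ i, M.grade i := by rw [M.grade_sup]; trivial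
    induction hx using Submodule.iSup_induction' with
    | mem i x hx =>
      by_cases h : i = n
      · subst h
        rw [hPs _ _ hx, hPs _ _ (M.d_grade hx)]
      · rw [hPn _ _ h _ hx, hPn (n + 1) (i + 1) (by omega) _ (M.d_grade hx), map_zero]
    | zero => simp
    | add x y _ _ hx hy => simp only [map_add, hx, hy]
  refine ⟨P n e, (DirectSum.component ℚ ℕ (fun i => lowGrade F i) n (g e)).2.2, ?_⟩
  rw [← hcomm, he, hPs _ _ hz]

theorem V_inter_below {M : CDGA} (F : FreeGens M) {k m : ℕ} (hkm : k < m) (v : M.carrier)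
    (hv : v ∈ F.V m) (hv' : v ∈ gensBelow F k) : v = 0 := by
  obtain ⟨g, hg, -⟩ := F.free M (fun i => if i = m then 0 else (F.V i).subtype) (by
    intro i v
    by_cases h : i = m
    · simp [h]
    · simpa [h] using F.V_le i v.2)
  have h1 : g.toFun v = 0 := by
    have := hg m ⟨v, hv⟩
    simpa using this
  have h2 : gensBelow F k ≤ AlgHom.equalizer g.toFun (AlgHom.id ℚ M.carrier) := by
    apply Algebra.adjoin_le
    rintro x ⟨i, hi, hx⟩
    have := hg i ⟨x, hx⟩
    have hne : i ≠ m := by omega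
    simp only [hne, if_false] at this
    exact this
  exact (h2 hv').symm.trans h1

/-- for a minimal model `M` of a bouquet of odd algebraic spheres (generators
odd, positive classes represented by generators) and odd `k`, the sub-DGA `M_k` generated
by generators of degree ≤ k satisfies `H^{k+1}(M_k) = 0` and `H^{k+2}(M_k) = 0`. -/
theorem stmt9 (S M : CDGA) (hS : IsBouquet S) (F : FreeGens M)
    (hmin : ∀ z, M.d z ∈ M.posSq) (f : CDGAHom M S) (hf : QuasiIso f)
    (hodd : ∀ k : ℕ, F.V (2 * k) = ⊥)
    (hrep : ∀ i : ℕ, 1 ≤ i → ∀ z ∈ M.grade i, M.d z = 0 →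
      ∃ v ∈ F.V i, M.d v = 0 ∧ M.exactAt (z - v))
    (k : ℕ) (hk : Odd k)
    (hclosed : ∀ z ∈ gensBelow F k, M.d z ∈ gensBelow F k) :
    (∀ z ∈ gensBelow F k, z ∈ M.grade (k + 1) → M.d z = 0 →
      ∃ e ∈ gensBelow F k, M.d e = z) ∧
    (∀ z ∈ gensBelow F k, z ∈ M.grade (k + 2) → M.d z = 0 →
      ∃ e ∈ gensBelow F k, M.d e = z) := by
  have heven : F.V (k + 1) = ⊥ := by
    obtain ⟨m, rfl⟩ := hk
    have := hodd (m + 1)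
    rwa [show 2 * (m + 1) = 2 * m + 1 + 1 by ring] at this
  refine ⟨fun z hz hzg hdz => ?_, fun z hz hzg hdz => ?_⟩
  · obtain ⟨v, hv, -, hex⟩ := hrep (k + 1) (by omega) z hzg hdz
    rw [heven, Submodule.mem_bot] at hv
    subst hv
    rw [sub_zero] at hex
    exact exists_primitive F k z hzg hex
  · obtain ⟨v, hv, -, hex⟩ := hrep (k + 2) (by omega) z hzg hdz
    obtain ⟨e, he, hde⟩ := exists_primitive F (k + 1) (z - v)
      (Submodule.sub_mem _ hzg (F.V_le _ hv)) hex
    have hle : gensBelow F (k + 1) ≤ gensBelow F k := by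
      apply Algebra.adjoin_le
      rintro x ⟨i, hi, hx⟩
      rcases Nat.lt_or_ge k i with h | h
      · obtain rfl : i = k + 1 := by omega
        rw [heven, Submodule.mem_bot] at hx
        subst hx
        exact (gensBelow F k).zero_mem
      · exact Algebra.subset_adjoin ⟨i, h, hx⟩
    have hv0 : v = 0 := by
      apply V_inter_below F (show k < k + 2 by omega) v hv
      have : v = z - M.d e := by rw [hde]; abel
      rw [this]
      exact (gensBelow F k).sub_mem hz (hclosed e (hle he))
    refine ⟨e, hle he, ?_⟩
    rw [hde, hv0, sub_zero]


end PaperDGA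
end

section
/- Let x be an element of odd degree 2k+1 > 1 in a commutative DGA of the form Λ(x)⊗ΛV with dx = 0, where the fiber differential d̄ on ΛV is the reduction setting x to 0. Suppose x = dv for some v ∈ ΛV (so deg v = 2k, d̄v = 0), and suppose v^n is d̄-exact in ΛV for some n ≥ 2, i.e., v^n = u₀·x + du for some u₀, u ∈ ΛV. Then v^{n-1} is also d̄-exact: v^{n-1} = (1/n) d̄u₀ modulo the ideal generated by x. -/
/-!  Common setup: commutative differential graded algebras (CDGAs) over ℚ,
graded by ℕ, with graded commutativity and the graded Leibniz rule. -/

namespace PaperDGA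

/-- in `Λ(x)⊗ΛV` (every element uniquely `a + b·x` with `a,b ∈ ΛV`), with
`x` of odd degree `2k+1 > 1`, `dx = 0`, `x = dv`, `v ∈ ΛV` of degree `2k`: if
`v^n = u₀·x + du` with `u₀, u ∈ ΛV` and `n ≥ 2`, then `v^{n-1} = (1/n)·d̄u₀` modulo the
ideal generated by `x`. -/
theorem stmt15 (A : CDGA) (k : ℕ) (hk : 0 < k) (x : A.carrier)
    (hx : x ∈ A.grade (2 * k + 1)) (hdx : A.d x = 0)
    (S : Subalgebra ℚ A.carrier)
    (hdec : ∀ z : A.carrier, ∃! p : ↥S × ↥S,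
      z = (p.1 : A.carrier) + (p.2 : A.carrier) * x)
    (v : A.carrier) (hv : v ∈ S) (hvg : v ∈ A.grade (2 * k)) (hdv : A.d v = x)
    (n : ℕ) (hn : 2 ≤ n) (u₀ u : A.carrier) (hu₀ : u₀ ∈ S) (hu : u ∈ S)
    (hex : v ^ n = u₀ * x + A.d u) :
    ∃ c : A.carrier, v ^ (n - 1) - ((n : ℚ)⁻¹) • A.d u₀ = c * x := by
  have hdux : ∀ w : A.carrier, A.d (w * x) = A.d w * x := by
    intro w
    have hw : w ∈ ⨆ i, A.grade i := by rw [A.grade_sup]; trivial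
    induction hw using Submodule.iSup_induction' with
    | mem i y hy => rw [A.leibniz hy, hdx]; simp
    | zero => simp
    | add y z _ _ h1 h2 => rw [add_mul, map_add, h1, h2, map_add, add_mul]
  have hxx : x * x = 0 := by
    have h := A.gcomm hx hx
    have hodd : Odd ((2 * k + 1) * (2 * k + 1)) := by
      exact Odd.mul ⟨k, rfl⟩ ⟨k, rfl⟩
    rw [hodd.neg_one_pow, neg_smul, one_smul] at h
    have h2 : (2 : ℚ) • (x * x) = 0 := by
      rw [two_smul]
      nth_rewrite 1 [h]
      exact neg_add_cancel _
    exact (smul_eq_zero.mp h2).resolve_left two_ne_zero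
  have hvx : Commute x v := by
    have h := A.gcomm hx hvg
    have he : Even ((2 * k + 1) * (2 * k)) := (even_two_mul k).mul_left _
    rw [he.neg_one_pow, one_smul] at h
    exact h
  have hpow : ∀ m : ℕ, A.d (v ^ (m + 1)) = ((m + 1 : ℕ) : ℚ) • (v ^ m * x) := by
    intro m
    induction m with
    | zero => simp [hdv]
    | succ m ih =>
      rw [pow_succ' v (m + 1), A.leibniz hvg, ih, hdv, (even_two_mul k).neg_one_pow, one_smul,
        mul_smul_comm, ← mul_assoc, ← pow_succ', (hvx.pow_right (m + 1)).eq]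
      push_cast
      module
  obtain ⟨m, rfl⟩ : ∃ m, n = m + 1 := ⟨n - 1, by omega⟩
  have hd := congrArg A.d hex
  rw [hpow, map_add, A.d_sq, add_zero, hdux] at hd
  have hne : ((m + 1 : ℕ) : ℚ) ≠ 0 := by exact_mod_cast Nat.succ_ne_zero m
  rw [Nat.add_sub_cancel]
  have hz : (v ^ m - (((m + 1 : ℕ) : ℚ)⁻¹) • A.d u₀) * x = 0 := by
    rw [sub_mul, smul_mul_assoc, ← hd, smul_smul, inv_mul_cancel₀ hne, one_smul, sub_self]
  obtain ⟨⟨a, b⟩, hab, -⟩ := hdec (v ^ m - (((m + 1 : ℕ) : ℚ)⁻¹) • A.d u₀)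
  simp only at hab
  rw [hab, add_mul, mul_assoc, hxx, mul_zero, add_zero] at hz
  have ha := (hdec 0).unique (y₁ := (0, a)) (y₂ := (0, 0)) (by simp [hz]) (by simp)
  have ha0 : a = 0 := congrArg Prod.snd ha
  refine ⟨b, ?_⟩
  rw [hab, ha0]
  simp


end PaperDGA
end
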